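/- Let ℓ ≥ 2 be an integer and S a (2^ℓ − 1)-periodic binary sequence whose linear complexity is at most ℓ (as is the case for m-sequences). Then there exists an integer k with 1 < k ≤ 3 such that S has a full peak in the periodic correlation measure of order k, i.e. θ_k(S) = 2^ℓ − 1. -/

import Mathlib

open Finset

/-- The first `N` terms of the binary sequence `s` satisfy a linear recurrence of order `L`
over `F₂`: `s (i+L) = c_{L-1} s (i+L-1) + … + c_0 s i` for `0 ≤ i < N - L`. -/
def IsLinRecOn (s : ℕ → ZMod 2) (N L : ℕ) : Prop :=
  ∃ c : Fin L → ZMod 2, ∀ i, i + L < N → s (i + L) = ∑ j : Fin L, c j * s (i + j)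

/-- The `N`th linear complexity of a binary sequence `s`: the smallest positive `L` such that
the first `N` terms satisfy a linear recurrence of order `L`, with the convention that it is `0`
when the first `N` terms all vanish. -/
noncomputable def linComplexity (s : ℕ → ZMod 2) (N : ℕ) : ℕ :=
  if ∀ i < N, s i = 0 then 0 else sInf {L | 0 < L ∧ IsLinRecOn s N L}

/-- The `N`th (aperiodic) correlation measure of order `k` of a binary sequence `s`:
`max_{U,D} |∑_{n=0}^{U-1} (-1)^{s_{n+d₁}+…+s_{n+d_k}}|` over `U ≤ N - k + 1` and
`0 ≤ d₁ < … < d_k ≤ N - U`. -/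
noncomputable def corr (s : ℕ → ZMod 2) (N k : ℕ) : ℕ :=
  sSup {m : ℕ | ∃ (U : ℕ) (d : Fin k → ℕ), U + k ≤ N + 1 ∧ StrictMono d ∧
    (∀ j, d j + U ≤ N) ∧
    m = (∑ n ∈ range U, (-1 : ℤ) ^ (∑ j : Fin k, (s (n + d j)).val)).natAbs}

/-- The periodic correlation measure of order `k` of a `T`-periodic binary sequence `s`:
`max_D |∑_{n=0}^{T-1} (-1)^{s_{n+d₁}+…+s_{n+d_k}}|` over `0 ≤ d₁ < … < d_k < T`. -/
noncomputable def pcorr (s : ℕ → ZMod 2) (T k : ℕ) : ℕ :=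
  sSup {m : ℕ | ∃ d : Fin k → ℕ, StrictMono d ∧ (∀ j, d j < T) ∧
    m = (∑ n ∈ range T, (-1 : ℤ) ^ (∑ j : Fin k, (s (n + d j)).val)).natAbs}

/-- The first `N` terms of `s` are generated by a (not necessarily linear) recurrence of
order `M`. -/
def IsMaxRecOn (s : ℕ → ZMod 2) (N M : ℕ) : Prop :=
  ∃ f : (Fin M → ZMod 2) → ZMod 2, ∀ i, i + M < N → s (i + M) = f (fun j => s (i + j))

/-- The `N`th maximum-order complexity of a binary sequence `s`. -/
noncomputable def maxOrderComplexity (s : ℕ → ZMod 2) (N : ℕ) : ℕ :=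
  sInf {M | 0 < M ∧ IsMaxRecOn s N M}

/-!
If `s` obeys a linear recurrence of order `L`, so does every sum of shifts
`n ↦ ∑ d ∈ D, s (n + d)`, and there are only `2 ^ L` solutions. Hence any family of more than
`2 ^ L` sets of shifts contains two distinct sets with the same sum; as `1 + 1 = 0`, the sum over
their symmetric difference vanishes, which is a full peak. If its order is `1`, then `s = 0`
and order `2` gives a full peak as well. The order is bounded by the diameter of the family, so one
wants a large family of diameter `2 * r + 1`: take all sets that, apart from the shift `0`, have at
most `r` elements. For `r = 1` and period `T` there are `2 * T` of them.
-/

section ShiftSum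

variable {R : Type*}

/-- The sum of the shifts of the sequence `s` by the elements of `D`; a full peak of the
correlation measure of order `#D` comes from a vanishing sum of this kind over `ZMod 2`. -/
def shiftSum [AddCommMonoid R] (s : ℕ → R) (D : Finset ℕ) (n : ℕ) : R :=
  ∑ d ∈ D, s (n + d)

theorem isSolution_shiftSum [CommSemiring R] {E : LinearRecurrence R} {s : ℕ → R}
    (hs : E.IsSolution s) (D : Finset ℕ) : E.IsSolution (shiftSum s D) := by
  intro n
  simp only [shiftSum, mul_sum]
  rw [sum_comm]
  refine sum_congr rfl fun d _ ↦ ?_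
  simpa only [add_right_comm] using hs (n + d)

theorem exists_ne_shiftSum_eq [CommSemiring R] [Fintype R] {E : LinearRecurrence R} {s : ℕ → R}
    (hs : E.IsSolution s) {𝒟 : Finset (Finset ℕ)} (h𝒟 : Fintype.card R ^ E.order < #𝒟) :
    ∃ D ∈ 𝒟, ∃ D' ∈ 𝒟, D ≠ D' ∧ shiftSum s D = shiftSum s D' := by
  classical
  have hcard : #(univ : Finset (Fin E.order → R)) < #𝒟 := by simpa using h𝒟
  obtain ⟨D, hD, D', hD', hne, hinit⟩ := exists_ne_map_eq_of_card_lt_of_maps_to hcard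
    (f := fun D j ↦ shiftSum s D j) fun _ _ ↦ mem_univ _
  refine ⟨D, hD, D', hD', hne, ?_⟩
  rw [E.eq_mk_of_is_sol_of_eq_init' (isSolution_shiftSum hs D) fun _ ↦ rfl,
    E.eq_mk_of_is_sol_of_eq_init' (isSolution_shiftSum hs D') fun j ↦ (congrFun hinit j).symm]

theorem sum_symmDiff_of_charTwo {α : Type*} [DecidableEq α] [Semiring R] [CharP R 2]
    (D D' : Finset α) (f : α → R) :
    ∑ d ∈ symmDiff D D', f d = ∑ d ∈ D, f d + ∑ d ∈ D', f d := by
  rw [Finset.symmDiff_def, sum_union disjoint_sdiff_sdiff, ← sum_inter_add_sum_sdiff D D',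
    ← sum_inter_add_sum_sdiff D' D, inter_comm D' D, add_add_add_comm,
    CharTwo.add_self_eq_zero, zero_add]

theorem shiftSum_symmDiff_eq_zero [Semiring R] [CharP R 2] {s : ℕ → R} {D D' : Finset ℕ}
    (h : shiftSum s D = shiftSum s D') : shiftSum s (symmDiff D D') = 0 := by
  funext n
  have hn : ∑ d ∈ D, s (n + d) = ∑ d ∈ D', s (n + d) := congrFun h n
  rw [shiftSum, sum_symmDiff_of_charTwo, hn, CharTwo.add_self_eq_zero, Pi.zero_apply]

theorem eq_zero_of_shiftSum_singleton_eq_zero [AddCommMonoid R] {s : ℕ → R} {T d : ℕ}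
    (hper : Function.Periodic s T) (hd : d ≤ T) (h : shiftSum s {d} = 0) : s = 0 := by
  funext n
  have hn : s (n + T - d + d) = 0 := by simpa [shiftSum] using congrFun h (n + T - d)
  rwa [Nat.sub_add_cancel (by lia), hper] at hn

end ShiftSum

section PuncturedBall

variable {α : Type*}

theorem card_filter_powerset_card_le (A : Finset α) (r : ℕ) :
    #{D ∈ A.powerset | #D ≤ r} = ∑ i ∈ range (r + 1), (#A).choose i := by
  rw [card_eq_sum_card_fiberwise (f := card) (t := range (r + 1))
    fun D hD ↦ by simpa [Nat.lt_succ_iff] using (mem_filter.1 hD).2]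
  refine sum_congr rfl fun i hi ↦ ?_
  rw [← card_powersetCard]
  congr 1
  ext D
  simp only [mem_filter, mem_powerset, mem_powersetCard, mem_range] at hi ⊢
  lia

variable [DecidableEq α]

/-- The subsets of `A` with at most `r` elements other than `a`. Any two of them differ in at most
`2 * r + 1` elements, so the pigeonhole principle on this family yields peaks of order at most
`2 * r + 1`. -/
def puncturedBall (A : Finset α) (a : α) (r : ℕ) : Finset (Finset α) :=
  {D ∈ A.powerset | #(D.erase a) ≤ r}

theorem mem_puncturedBall {A D : Finset α} {a : α} {r : ℕ} :
    D ∈ puncturedBall A a r ↔ D ⊆ A ∧ #(D.erase a) ≤ r := by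
  rw [puncturedBall, mem_filter, mem_powerset]

theorem puncturedBall_eq_union_image_insert {A : Finset α} {a : α} (ha : a ∈ A) (r : ℕ) :
    puncturedBall A a r = {D ∈ (A.erase a).powerset | #D ≤ r} ∪
      {D ∈ (A.erase a).powerset | #D ≤ r}.image (insert a) := by
  ext D
  simp only [mem_puncturedBall, mem_union, mem_image, mem_filter, mem_powerset]
  constructor
  · rintro ⟨hDA, hDr⟩
    by_cases haD : a ∈ D
    · exact .inr ⟨D.erase a, ⟨erase_subset_erase a hDA, hDr⟩, insert_erase haD⟩
    · rw [erase_eq_of_notMem haD] at hDr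
      exact .inl ⟨subset_erase.2 ⟨hDA, haD⟩, hDr⟩
  · rintro (⟨hDA, hDr⟩ | ⟨D, ⟨hDA, hDr⟩, rfl⟩)
    · exact ⟨hDA.trans (erase_subset a A), card_erase_le.trans hDr⟩
    · have haD : a ∉ D := (subset_erase.1 hDA).2
      exact ⟨insert_subset ha (hDA.trans (erase_subset a A)), by rwa [erase_insert haD]⟩

theorem card_puncturedBall {A : Finset α} {a : α} (ha : a ∈ A) (r : ℕ) :
    #(puncturedBall A a r) = 2 * ∑ i ∈ range (r + 1), (#A - 1).choose i := by
  rw [puncturedBall_eq_union_image_insert ha, ← card_erase_of_mem ha,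
    ← card_filter_powerset_card_le]
  set 𝒮 := {D ∈ (A.erase a).powerset | #D ≤ r}
  have ha𝒮 : ∀ D ∈ 𝒮, a ∉ D := fun D hD ↦
    (subset_erase.1 (mem_powerset.1 (mem_filter.1 hD).1)).2
  have hdisj : Disjoint 𝒮 (𝒮.image (insert a)) := by
    rw [disjoint_left]
    intro D hD hD'
    obtain ⟨D', -, rfl⟩ := mem_image.1 hD'
    exact ha𝒮 _ hD (mem_insert_self a D')
  have hinj : Set.InjOn (insert a) (𝒮 : Set (Finset α)) := fun D hD D' hD' h ↦ by
    rw [← erase_insert (ha𝒮 D hD), h, erase_insert (ha𝒮 D' hD')]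
  rw [card_union_of_disjoint hdisj, card_image_of_injOn hinj, two_mul]

theorem card_symmDiff_le_of_mem_puncturedBall {A D D' : Finset α} {a : α} {r : ℕ}
    (hD : D ∈ puncturedBall A a r) (hD' : D' ∈ puncturedBall A a r) :
    #(symmDiff D D') ≤ 2 * r + 1 := by
  have hsub : symmDiff D D' ⊆ insert a (D.erase a ∪ D'.erase a) := by grind [mem_symmDiff]
  calc #(symmDiff D D') ≤ #(insert a (D.erase a ∪ D'.erase a)) := card_le_card hsub
    _ ≤ #(D.erase a) + #(D'.erase a) + 1 :=
      (card_insert_le _ _).trans (Nat.add_le_add_right (card_union_le _ _) 1)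
    _ ≤ 2 * r + 1 := by
      have := (mem_puncturedBall.1 hD).2
      have := (mem_puncturedBall.1 hD').2
      lia

end PuncturedBall

section LinearComplexity

variable {s : ℕ → ZMod 2} {N L T : ℕ}

theorem isLinRecOn_linComplexity (s : ℕ → ZMod 2) (N : ℕ) :
    IsLinRecOn s N (linComplexity s N) := by
  unfold linComplexity
  split_ifs with hzero
  · exact ⟨0, fun i hi ↦ by simpa using hzero i hi⟩
  · have hne : {L | 0 < L ∧ IsLinRecOn s N L}.Nonempty :=
      ⟨N + 1, by simp, 0, fun i hi ↦ by lia⟩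
    exact (Nat.sInf_mem hne).2

theorem isLinRecOn_of_periodic (hT : 0 < T) (hper : Function.Periodic s T) (N : ℕ) :
    IsLinRecOn s N T := by
  refine ⟨Pi.single ⟨0, hT⟩ 1, fun i _ ↦ ?_⟩
  simp [Pi.single_apply, hper i]

theorem linComplexity_le_of_isLinRecOn (hL : 0 < L) (h : IsLinRecOn s N L) :
    linComplexity s N ≤ L := by
  unfold linComplexity
  split_ifs
  · exact L.zero_le
  · exact Nat.sInf_le ⟨hL, h⟩

theorem exists_isSolution_of_isLinRecOn_of_periodic (hT : 0 < T) (hper : Function.Periodic s T)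
    (h : IsLinRecOn s N L) (hN : T + L ≤ N) :
    ∃ E : LinearRecurrence (ZMod 2), E.order = L ∧ E.IsSolution s := by
  obtain ⟨c, hc⟩ := h
  refine ⟨⟨L, c⟩, rfl, fun n ↦ ?_⟩
  have hmod (a : ℕ) : s (n + a) = s (n % T + a) := by
    rw [← hper.map_mod_nat (n + a), ← hper.map_mod_nat (n % T + a), Nat.mod_add_mod]
  have hn := Nat.mod_lt n hT
  simp only [hmod]
  exact hc (n % T) (by lia)

theorem exists_isSolution_order_eq_linComplexity (hT : 0 < T) (hper : Function.Periodic s T) :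
    ∃ E : LinearRecurrence (ZMod 2), E.order = linComplexity s (2 * T) ∧ E.IsSolution s := by
  have hle : linComplexity s (2 * T) ≤ T :=
    linComplexity_le_of_isLinRecOn hT (isLinRecOn_of_periodic hT hper _)
  exact exists_isSolution_of_isLinRecOn_of_periodic hT hper (isLinRecOn_linComplexity s _) (by lia)

end LinearComplexity

section FullPeak

variable {s : ℕ → ZMod 2} {T : ℕ}

theorem pcorr_card_eq_of_shiftSum_eq_zero {D : Finset ℕ} (hD : D ⊆ range T)
    (h : shiftSum s D = 0) : pcorr s T #D = T := by
  refine IsGreatest.csSup_eq ⟨⟨D.orderEmbOfFin rfl, (D.orderEmbOfFin rfl).strictMono,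
    fun j ↦ mem_range.1 (hD (D.orderEmbOfFin_mem rfl j)), ?_⟩, ?_⟩
  · have hsum (n : ℕ) : ∑ j, s (n + D.orderEmbOfFin rfl j) = 0 := by
      calc ∑ j, s (n + D.orderEmbOfFin rfl j)
          = ∑ d ∈ univ.map (D.orderEmbOfFin rfl).toEmbedding, s (n + d) := by rw [sum_map]; rfl
        _ = 0 := by rw [map_orderEmbOfFin_univ]; exact congrFun h n
    have heven (n : ℕ) : Even (∑ j, (s (n + D.orderEmbOfFin rfl j)).val) := by
      rw [← ZMod.natCast_eq_zero_iff_even, Nat.cast_sum]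
      simpa only [ZMod.natCast_zmod_val] using hsum n
    simp only [(heven _).neg_one_pow, sum_const, card_range, nsmul_eq_mul, mul_one,
      Int.natAbs_natCast]
  · rintro m ⟨d, -, -, rfl⟩
    exact (Int.natAbs_sum_le _ _).trans (by simp [Int.natAbs_pow])

theorem exists_pcorr_eq_of_shiftSum_eq_zero (hT : 1 < T) (hper : Function.Periodic s T)
    {D : Finset ℕ} (hD : D ⊆ range T) (hne : D.Nonempty) (h : shiftSum s D = 0) :
    ∃ k, 1 < k ∧ k ≤ max 2 #D ∧ pcorr s T k = T := by
  obtain hcard | hcard := (Nat.one_le_iff_ne_zero.2 hne.card_ne_zero).eq_or_lt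
  · obtain ⟨d, rfl⟩ := card_eq_one.1 hcard.symm
    have hd : d < T := by simpa using hD
    have hs : s = 0 := eq_zero_of_shiftSum_singleton_eq_zero hper hd.le h
    have hzero : shiftSum s (range 2) = 0 := by
      funext n
      simp [shiftSum, hs]
    have hpeak := pcorr_card_eq_of_shiftSum_eq_zero (range_subset_range.2 hT) hzero
    rw [card_range] at hpeak
    exact ⟨2, one_lt_two, le_max_left _ _, hpeak⟩
  · exact ⟨#D, hcard, le_max_right _ _, pcorr_card_eq_of_shiftSum_eq_zero hD h⟩

end FullPeak

theorem m_sequence_peak_general {T L r : ℕ} (hT : 1 < T) (hr : 0 < r) {s : ℕ → ZMod 2}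
    (hper : Function.Periodic s T) (hL : linComplexity s (2 * T) ≤ L)
    (hcard : 2 ^ L < 2 * ∑ i ∈ range (r + 1), (T - 1).choose i) :
    ∃ k, 1 < k ∧ k ≤ 2 * r + 1 ∧ pcorr s T k = T := by
  have hT₀ : 0 < T := by lia
  obtain ⟨E, horder, hs⟩ := exists_isSolution_order_eq_linComplexity hT₀ hper
  have hball : Fintype.card (ZMod 2) ^ E.order < #(puncturedBall (range T) 0 r) := by
    rw [card_puncturedBall (mem_range.2 hT₀), card_range, ZMod.card, horder]
    exact (Nat.pow_le_pow_right two_pos hL).trans_lt hcard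
  obtain ⟨D, hD, D', hD', hne, heq⟩ := exists_ne_shiftSum_eq hs hball
  have hsub : symmDiff D D' ⊆ range T := symmDiff_subset_union.trans <|
    union_subset (mem_puncturedBall.1 hD).1 (mem_puncturedBall.1 hD').1
  obtain ⟨k, hk, hkD, hpeak⟩ := exists_pcorr_eq_of_shiftSum_eq_zero hT hper hsub
    (symmDiff_nonempty.2 hne) (shiftSum_symmDiff_eq_zero heq)
  have hdiam := card_symmDiff_le_of_mem_puncturedBall hD hD'
  exact ⟨k, hk, by lia, hpeak⟩

/-- **m-sequences.** A `(2^ℓ - 1)`-periodic binary sequence with linear complexity at most `ℓ`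
has a full peak in the periodic correlation measure of some order `k` with `1 < k ≤ 3`. -/
theorem m_sequence_peak (ℓ : ℕ) (hℓ : 2 ≤ ℓ) (s : ℕ → ZMod 2)
    (hper : ∀ i, s (i + (2 ^ ℓ - 1)) = s i)
    (hL : linComplexity s (2 * (2 ^ ℓ - 1)) ≤ ℓ) :
    ∃ k, 1 < k ∧ k ≤ 3 ∧ pcorr s (2 ^ ℓ - 1) k = 2 ^ ℓ - 1 := by
  have hpow : 2 ^ 2 ≤ 2 ^ ℓ := Nat.pow_le_pow_right two_pos hℓ
  exact m_sequence_peak_general (r := 1) (by lia) one_pos hper hL (by simp [sum_range_succ]; lia)
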